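/- Let X = [0,1] × [−1,1] ⊂ ℝ² with the Euclidean metric, and let Y be the disjoint union of X and the interval [0, 1/2]. Let D be any pseudometric on Y whose restriction to the copy of X is the Euclidean metric and whose restriction to the copy of [0, 1/2] is the standard metric on ℝ. Let ∼ be the equivalence relation on Y generated by identifying t ∈ [0, 1/2] with (2t, 0) ∈ X, and let D̄ be the associated quotient pseudometric on Y/∼. Then D̄([(0,0)], [(1,0)]) ≤ 1/2. In particular, since the Euclidean distance between (0,0) and (1,0) equals 1, the quotient pseudometric restricted to the image of X does not agree with the Euclidean metric. -/

import Mathlib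

open Set

/-- The quotient pseudometric associated with a pseudometric `d` on `X` and an equivalence
relation `r` on `X`: `d̄(x̄, ȳ) = inf Σ_{i=1}^n d(x_i, y_i)` over all finite chains
`(x_1, y_1, …, x_n, y_n)` with `x_1 ∼ x`, `y_n ∼ y`, and `y_i ∼ x_{i+1}` for `i < n`. -/
noncomputable def quotientDist {X : Type*} (d : X → X → ℝ) (r : X → X → Prop)
    (x y : X) : ℝ :=
  sInf {c : ℝ | ∃ (n : ℕ) (xs ys : ℕ → X), 1 ≤ n ∧ r (xs 1) x ∧ r (ys n) y ∧
    (∀ i : ℕ, 1 ≤ i → i < n → r (ys i) (xs (i + 1))) ∧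
    c = ∑ i ∈ Finset.Icc 1 n, d (xs i) (ys i)}

/-- The basic identification of `t ∈ [0, 1/2]` (in the interval copy) with the point
`(2t, 0)` of the rectangle copy, in the disjoint union of the Euclidean plane and `ℝ`. -/
def glueBase (u v : EuclideanSpace ℝ (Fin 2) ⊕ ℝ) : Prop :=
  ∃ (t : ℝ) (z : EuclideanSpace ℝ (Fin 2)), t ∈ Set.Icc (0 : ℝ) (1 / 2) ∧
    z 0 = 2 * t ∧ z 1 = 0 ∧ u = Sum.inr t ∧ v = Sum.inl z

theorem quotientDist_le_of_rel {X : Type*} {d : X → X → ℝ} {r : X → X → Prop}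
    (hd : ∀ u v, 0 ≤ d u v) {x y a b : X} (ha : r a x) (hb : r b y) :
    quotientDist d r x y ≤ d a b := by
  refine csInf_le ⟨0, ?_⟩
    ⟨1, fun _ ↦ a, fun _ ↦ b, le_rfl, ha, hb, fun i hi hi' ↦ absurd hi hi'.not_ge, by simp⟩
  rintro c ⟨n, xs, ys, -, -, -, -, rfl⟩
  exact Finset.sum_nonneg fun i _ ↦ hd (xs i) (ys i)

theorem half_mem_Icc_zero_half {K : Type*} [Field K] [LinearOrder K] [IsStrictOrderedRing K]
    {x : K} (hx : x ∈ Icc (0 : K) 1) : x / 2 ∈ Icc (0 : K) (1 / 2) :=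
  ⟨by linarith [hx.1], by linarith [hx.2]⟩

theorem eqvGen_glueBase_half {z : EuclideanSpace ℝ (Fin 2)} (hz₀ : z 0 ∈ Icc (0 : ℝ) 1)
    (hz₁ : z 1 = 0) : Relation.EqvGen glueBase (Sum.inr (z 0 / 2)) (Sum.inl z) :=
  .rel _ _ ⟨z 0 / 2, z, half_mem_Icc_zero_half hz₀, by ring, hz₁, rfl, rfl⟩

theorem euclideanSpace_dist_eq_of_forall_ne {ι : Type*} [Fintype ι] {p q : EuclideanSpace ℝ ι}
    (i : ι) (h : ∀ j, j ≠ i → p j = q j) : dist p q = |p i - q i| := by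
  rw [EuclideanSpace.dist_eq, Fintype.sum_eq_single i fun j hj ↦ by simp [h j hj],
    Real.sqrt_sq dist_nonneg, Real.dist_eq]

theorem dist_eq_abs_sub_of_snd_eq {p q : EuclideanSpace ℝ (Fin 2)} (h : p 1 = q 1) :
    dist p q = |p 0 - q 0| :=
  euclideanSpace_dist_eq_of_forall_ne 0 (by simpa [Fin.forall_fin_two] using h)

theorem quotient_pseudometric_shrinks_rectangle_general
    {D : EuclideanSpace ℝ (Fin 2) ⊕ ℝ → EuclideanSpace ℝ (Fin 2) ⊕ ℝ → ℝ}
    (hD_nonneg : ∀ u v, 0 ≤ D u v)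
    (hD_interval : ∀ s t : ℝ, s ∈ Icc (0 : ℝ) (1 / 2) → t ∈ Icc (0 : ℝ) (1 / 2) →
      D (Sum.inr s) (Sum.inr t) = |s - t|)
    {p q : EuclideanSpace ℝ (Fin 2)} (hp₀ : p 0 ∈ Icc (0 : ℝ) 1) (hp₁ : p 1 = 0)
    (hq₀ : q 0 ∈ Icc (0 : ℝ) 1) (hq₁ : q 1 = 0) :
    quotientDist D (Relation.EqvGen glueBase) (Sum.inl p) (Sum.inl q) ≤ dist p q / 2 := by
  -- A one-link chain through the glued interval, which runs along the segment at double speed.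
  calc quotientDist D (Relation.EqvGen glueBase) (Sum.inl p) (Sum.inl q)
      ≤ D (Sum.inr (p 0 / 2)) (Sum.inr (q 0 / 2)) :=
        quotientDist_le_of_rel hD_nonneg (eqvGen_glueBase_half hp₀ hp₁)
          (eqvGen_glueBase_half hq₀ hq₁)
    _ = |p 0 / 2 - q 0 / 2| :=
        hD_interval _ _ (half_mem_Icc_zero_half hp₀) (half_mem_Icc_zero_half hq₀)
    _ = |p 0 - q 0| / 2 := by rw [← sub_div, abs_div, abs_two]
    _ = dist p q / 2 := by rw [dist_eq_abs_sub_of_snd_eq (hp₁.trans hq₁.symm)]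

/-- **Metric gluing can shrink distances.** Let `Y` be the disjoint union of the rectangle
`X = [0,1] × [-1,1]` (in the Euclidean plane) and the interval `[0, 1/2]`, and let `D` be
any pseudometric on `Y` restricting to the Euclidean metric on the copy of `X` and to the
standard metric on the copy of `[0, 1/2]`. Let `∼` be the equivalence relation generated
by identifying `t ∈ [0, 1/2]` with `(2t, 0) ∈ X` and let `D̄` be the quotient
pseudometric. Then `D̄([(0,0)], [(1,0)]) ≤ 1/2`, even though the Euclidean distance
between `(0,0)` and `(1,0)` equals `1`; so the quotient pseudometric does not agree with
the Euclidean metric on the image of `X`. -/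
theorem quotient_pseudometric_shrinks_rectangle
    (D : EuclideanSpace ℝ (Fin 2) ⊕ ℝ → EuclideanSpace ℝ (Fin 2) ⊕ ℝ → ℝ)
    (hD_nonneg : ∀ u v, 0 ≤ D u v) (hD_symm : ∀ u v, D u v = D v u)
    (hD_refl : ∀ u, D u u = 0) (hD_tri : ∀ u v w, D u w ≤ D u v + D v w)
    (hD_rect : ∀ p q : EuclideanSpace ℝ (Fin 2),
      p 0 ∈ Set.Icc (0 : ℝ) 1 → p 1 ∈ Set.Icc (-1 : ℝ) 1 →
      q 0 ∈ Set.Icc (0 : ℝ) 1 → q 1 ∈ Set.Icc (-1 : ℝ) 1 →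
      D (Sum.inl p) (Sum.inl q) = dist p q)
    (hD_interval : ∀ s t : ℝ, s ∈ Set.Icc (0 : ℝ) (1 / 2) → t ∈ Set.Icc (0 : ℝ) (1 / 2) →
      D (Sum.inr s) (Sum.inr t) = |s - t|)
    (z₀ z₁ : EuclideanSpace ℝ (Fin 2))
    (hz₀ : z₀ 0 = 0 ∧ z₀ 1 = 0) (hz₁ : z₁ 0 = 1 ∧ z₁ 1 = 0) :
    quotientDist D (Relation.EqvGen glueBase) (Sum.inl z₀) (Sum.inl z₁) ≤ 1 / 2 ∧
      dist z₀ z₁ = 1 := by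
  have hdist : dist z₀ z₁ = 1 := by
    simp [dist_eq_abs_sub_of_snd_eq (hz₀.2.trans hz₁.2.symm), hz₀.1, hz₁.1]
  refine ⟨?_, hdist⟩
  simpa only [hdist] using quotient_pseudometric_shrinks_rectangle_general hD_nonneg hD_interval
    (by simp [hz₀.1]) hz₀.2 (by simp [hz₁.1]) hz₁.2
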